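/- arXiv:2409.06849 — 2 statements merged into one kernel-verified Lean document; each statement's English description precedes it below -/
import Mathlib

section
/- Let d ≥ 3 and fix k ∈ {0,…,d−1}. For n ∈ ℕ let w_n be the middle component of f^n(T_{d−1−k}) and let w⃗_n ∈ ℕ^d be its Parikh vector. Then w⃗_{n+1} = M w⃗_n + ℓ_n^{(k)}, where M is the incidence matrix of φ_d and: for 1 ≤ k ≤ d−2, ℓ_n^{(k)} = e_0 + e_{d−1} if n ≡ k−1 (mod d−1) or n ≡ d−2 (mod d−1), and ℓ_n^{(k)} = e_0 otherwise; for k = 0 and k = d−1, ℓ_n^{(k)} = e_0 + 2e_{d−1} if n ≡ d−2 (mod d−1), and ℓ_n^{(k)} = e_0 otherwise. -/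
namespace RichRT

variable {A : Type*}

/-- The word `w` occurs in the sequence `u` at position `j`. -/
def OccursAt (w : List A) (u : ℕ → A) (j : ℕ) : Prop :=
  w = (List.range w.length).map fun t => u (j + t)

/-- `w` is a factor of the infinite sequence `u`. -/
def IsFactorS (w : List A) (u : ℕ → A) : Prop :=
  ∃ j : ℕ, OccursAt w u j

/-- `u` is recurrent: every factor occurs infinitely often. -/
def Recurrent (u : ℕ → A) : Prop :=
  ∀ w : List A, IsFactorS w u → ∀ N : ℕ, ∃ j, N ≤ j ∧ OccursAt w u j

/-- The number of distinct palindromic factors of a finite word. -/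
noncomputable def palCount (w : List A) : ℕ :=
  Set.ncard {p : List A | p <:+: w ∧ p.reverse = p}

/-- A finite word of length `n` is rich if it has exactly `n+1` palindromic factors. -/
def RichWord (w : List A) : Prop := palCount w = w.length + 1

/-- A sequence is rich if all its factors are rich. -/
def RichSeq (u : ℕ → A) : Prop := ∀ w : List A, IsFactorS w u → RichWord w

/-- The prefix of length `k` of the periodic sequence `vvv⋯`. -/
def powPref (v : List A) (k : ℕ) : List A := ((List.replicate k v).flatten).take k

/-- The set of exponents `k/|v|` of fractional powers `v^(k/|v|)` occurring in `u`,
with `|v| ≥ n`. -/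
def expSet (u : ℕ → A) (n : ℕ) : Set ℝ :=
  {x | ∃ (v : List A) (k : ℕ), v ≠ [] ∧ n ≤ v.length ∧
    IsFactorS (powPref v k) u ∧ x = (k : ℝ) / (v.length : ℝ)}

/-- The critical exponent of a sequence, with values in `EReal`. -/
noncomputable def critExp (u : ℕ → A) : EReal :=
  sSup ((fun x : ℝ => (x : EReal)) '' expSet u 0)

/-- The asymptotic critical exponent of a sequence: `⊤` if the critical exponent is `⊤`,
otherwise the limit (= infimum, by monotonicity) over `n` of the suprema of exponents of
powers `v^e` with `|v| ≥ n`. -/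
noncomputable def acritExp (u : ℕ → A) : EReal :=
  if critExp u = ⊤ then ⊤
  else ⨅ n : ℕ, sSup ((fun x : ℝ => (x : EReal)) '' expSet u n)

/-- The morphism `φ_d` on letters: `i ↦ 0(i+1)` for `i < d-1`, `d-1 ↦ 0(d-1)(d-1)`. -/
def phiL (d : ℕ) (i : ℕ) : List ℕ :=
  if i < d - 1 then [0, i + 1] else [0, d - 1, d - 1]

/-- The morphism `φ_d` on words. -/
def phiW (d : ℕ) (w : List ℕ) : List ℕ := w.flatMap (phiL d)

/-- `u` is the fixed point of `φ_d`: it begins with `0` and `φ_d(u) = u`, i.e. the image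
of every prefix of `u` is again a prefix of `u`. -/
def IsPhiFixed (d : ℕ) (u : ℕ → ℕ) : Prop :=
  u 0 = 0 ∧ ∀ m : ℕ, OccursAt (phiW d ((List.range m).map u)) u 0

/-- Left extensions of `w` in `u`. -/
def Lext (u : ℕ → ℕ) (w : List ℕ) : Set (List ℕ) :=
  {x | ∃ i : ℕ, x = i :: w ∧ IsFactorS x u}

/-- Right extensions of `w` in `u`. -/
def Rext (u : ℕ → ℕ) (w : List ℕ) : Set (List ℕ) :=
  {x | ∃ i : ℕ, x = w ++ [i] ∧ IsFactorS x u}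

/-- Both-sided extensions of `w` in `u`. -/
def Bext (u : ℕ → ℕ) (w : List ℕ) : Set (List ℕ) :=
  {x | ∃ i j : ℕ, x = i :: (w ++ [j]) ∧ IsFactorS x u}

/-- `w` is a bispecial factor of `u`. -/
def Bispecial (u : ℕ → ℕ) (w : List ℕ) : Prop :=
  IsFactorS w u ∧ 2 ≤ (Lext u w).ncard ∧ 2 ≤ (Rext u w).ncard

/-- The bilateral order `b(w) = #Bext(w) − #Lext(w) − #Rext(w) + 1`. -/
noncomputable def bord (u : ℕ → ℕ) (w : List ℕ) : ℤ :=
  ((Bext u w).ncard : ℤ) - ((Lext u w).ncard : ℤ) - ((Rext u w).ncard : ℤ) + 1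

/-- The palindromes `F_0 = ε`, `F_i = φ(F_{i-1})0`. -/
def Fword (d : ℕ) : ℕ → List ℕ
  | 0 => []
  | i + 1 => phiW d (Fword d i) ++ [0]

/-- Membership in the set `𝒯` of bispecial triplets. -/
def TripleMem (d : ℕ) (u : ℕ → ℕ) (t : ℕ × List ℕ × ℕ) : Prop :=
  Bispecial u t.2.1 ∧ t.1 < d - 1 ∧ t.2.2 < d - 1 ∧
    IsFactorS (t.1 :: t.2.1) u ∧ IsFactorS (t.2.1 ++ [t.2.2]) u

/-- The map `f` on triplets. -/
def fmap (d : ℕ) (t : ℕ × List ℕ × ℕ) : ℕ × List ℕ × ℕ :=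
  ((t.1 + 1) % (d - 1),
   (if t.1 = d - 2 then [d - 1] else []) ++ phiW d t.2.1 ++ [0] ++
     (if t.2.2 = d - 2 then [d - 1] else []),
   (t.2.2 + 1) % (d - 1))

/-- The initial triplets `T_k = (0, ε, k)` for `k ≤ d-2` and `T_{d-1} = (0, d-1, 0)`. -/
def Tinit (d k : ℕ) : ℕ × List ℕ × ℕ :=
  if k = d - 1 then (0, [d - 1], 0) else (0, ([] : List ℕ), k)

/-- The Parikh vector of a word. -/
def parikh (d : ℕ) (w : List ℕ) : Fin d → ℕ := fun i => w.count (i : ℕ)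

/-- The incidence matrix of `φ_d`. -/
def Mmat (d : ℕ) : Matrix (Fin d) (Fin d) ℕ := fun i j => (phiL d (j : ℕ)).count (i : ℕ)

/-- `r` is a return word to `w` in `u`. -/
def ReturnWord (u : ℕ → ℕ) (w r : List ℕ) : Prop :=
  ∃ j ℓ : ℕ, j < ℓ ∧ OccursAt w u j ∧ OccursAt w u ℓ ∧
    (∀ m, j < m → m < ℓ → ¬ OccursAt w u m) ∧
    r = (List.range (ℓ - j)).map fun t => u (j + t)

/-- `R` is a complete return word to `w` in `u`. -/
def CompleteReturn (u : ℕ → ℕ) (w R : List ℕ) : Prop :=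
  ∃ r : List ℕ, ReturnWord u w r ∧ R = r ++ w

/-!
Counting letters turns `φ` into `M`, so `f` acts on Parikh vectors as `M` plus the contribution
of the letters it adds around `φ(w)`: always one `0`, and one `d - 1` for each outer letter equal
to `d - 2`. Along an orbit both outer letters rotate modulo `d - 1`; starting from
`T_{d-1-k}` they are `n` and `n - k` modulo `d - 1`, which hit `d - 2` when `n ≡ d - 2` and when
`n ≡ k - 1` respectively. These two events coincide exactly when `k = 0` or `k = d - 1`.
-/

theorem iterate_add_one_mod {m a : ℕ} (ha : a < m) (n : ℕ) :
    (fun x => (x + 1) % m)^[n] a = (a + n) % m := by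
  induction n with
  | zero => exact (Nat.mod_eq_of_lt ha).symm
  | succ n ih => rw [Function.iterate_succ_apply', ih, Nat.mod_add_mod, add_assoc]

theorem sub_add_mod_eq_pred_iff {m k : ℕ} (hk : 0 < k) (hkm : k ≤ m) (n : ℕ) :
    (m - k + n) % m = m - 1 ↔ n % m = k - 1 := by
  have hr : n % m < m := Nat.mod_lt n (by omega)
  rw [← Nat.add_mod_mod]
  rcases lt_or_ge (n % m) k with h | h
  · rw [Nat.mod_eq_of_lt (by omega)]; omega
  · rw [Nat.mod_eq_sub_mod (by omega), Nat.mod_eq_of_lt (by omega)]; omega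

section Words

variable {d : ℕ}

theorem parikh_append (v w : List ℕ) : parikh d (v ++ w) = parikh d v + parikh d w :=
  funext fun _ => List.count_append

theorem parikh_singleton (j : Fin d) : parikh d [(j : ℕ)] = Pi.single j 1 := by
  ext i
  simp only [parikh, List.count_singleton, Pi.single_apply, Fin.ext_iff, beq_iff_eq,
    eq_comm (a := (j : ℕ))]

theorem parikh_phiW {w : List ℕ} (hw : ∀ x ∈ w, x < d) :
    parikh d (phiW d w) = (Mmat d).mulVec (parikh d w) := by
  induction w with
  | nil => exact (Matrix.mulVec_zero (Mmat d)).symm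
  | cons a w ih =>
    obtain ⟨ha, hw⟩ := List.forall_mem_cons.mp hw
    calc parikh d (phiW d (a :: w))
        = parikh d (phiL d a) + parikh d (phiW d w) := parikh_append _ _
      _ = (Mmat d).mulVec (Pi.single ⟨a, ha⟩ 1) + (Mmat d).mulVec (parikh d w) := by
        rw [ih hw, Matrix.mulVec_single_one]; rfl
      _ = (Mmat d).mulVec (parikh d (a :: w)) := by
        rw [← Matrix.mulVec_add, ← parikh_singleton ⟨a, ha⟩, ← parikh_append]; rfl

theorem lt_of_mem_phiL (hd : 0 < d) {i x : ℕ} (hx : x ∈ phiL d i) : x < d := by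
  unfold phiL at hx
  split_ifs at hx <;> simp only [List.mem_cons, List.not_mem_nil, or_false] at hx <;> omega

theorem lt_of_mem_phiW (hd : 0 < d) {w : List ℕ} {x : ℕ} (hx : x ∈ phiW d w) : x < d :=
  let ⟨_, _, hx⟩ := List.mem_flatMap.mp hx
  lt_of_mem_phiL hd hx

end Words

section Orbits

variable {d : ℕ} {t : ℕ × List ℕ × ℕ}

/-- The vector `e_0 + [a = d-2] e_{d-1} + [b = d-2] e_{d-1}`, the difference between the Parikh
vector of the middle component of `f(a, w, b)` and `M w⃗`. -/
def fmapIncrement (d a b : ℕ) : Fin d → ℕ := fun i =>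
  (if (i : ℕ) = 0 then 1 else 0) +
    (if (i : ℕ) = d - 1 then
      (if a = d - 2 then 1 else 0) + (if b = d - 2 then 1 else 0)
    else 0)

theorem parikh_fmap (ht : ∀ x ∈ t.2.1, x < d) :
    parikh d (fmap d t).2.1 =
      (Mmat d).mulVec (parikh d t.2.1) + fmapIncrement d t.1 t.2.2 := by
  have count_guarded (i : Fin d) (p : Prop) [Decidable p] :
      (if p then [d - 1] else []).count (i : ℕ) =
        if (i : ℕ) = d - 1 then (if p then 1 else 0) else 0 := by
    split_ifs <;> simp [List.count_singleton] <;> omega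
  rw [← parikh_phiW ht]
  ext i
  simp only [parikh, fmap, fmapIncrement, Pi.add_apply, List.count_append, count_guarded,
    List.count_singleton, beq_iff_eq, eq_comm (a := 0)]
  split_ifs <;> omega

theorem lt_of_mem_fmap (hd : 0 < d) {x : ℕ} (hx : x ∈ (fmap d t).2.1) : x < d := by
  simp only [fmap, List.mem_append, List.mem_ite_nil_right, List.mem_singleton] at hx
  rcases hx with ((⟨-, hx⟩ | hx) | hx) | ⟨-, hx⟩
  · omega
  · exact lt_of_mem_phiW hd hx
  · omega
  · omega

theorem lt_of_mem_fmap_iterate (hd : 0 < d) (ht : ∀ x ∈ t.2.1, x < d) (n : ℕ) :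
    ∀ x ∈ ((fmap d)^[n] t).2.1, x < d :=
  Function.Iterate.rec (fun t : ℕ × List ℕ × ℕ => ∀ x ∈ t.2.1, x < d) ht
    (fun _ _ _ hx => lt_of_mem_fmap hd hx) n

theorem fmap_iterate_fst (ht : t.1 < d - 1) (n : ℕ) :
    ((fmap d)^[n] t).1 = (t.1 + n) % (d - 1) :=
  have rotates : Function.Semiconj Prod.fst (fmap d) fun x => (x + 1) % (d - 1) := fun _ => rfl
  (rotates.iterate_right n t).trans (iterate_add_one_mod ht n)

theorem fmap_iterate_snd_snd (ht : t.2.2 < d - 1) (n : ℕ) :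
    ((fmap d)^[n] t).2.2 = (t.2.2 + n) % (d - 1) :=
  have rotates : Function.Semiconj (fun t : ℕ × List ℕ × ℕ => t.2.2) (fmap d)
      fun x => (x + 1) % (d - 1) := fun _ => rfl
  (rotates.iterate_right n t).trans (iterate_add_one_mod ht n)

theorem parikh_fmap_iterate_succ (ha : t.1 < d - 1) (hw : ∀ x ∈ t.2.1, x < d)
    (hb : t.2.2 < d - 1) (n : ℕ) :
    parikh d ((fmap d)^[n + 1] t).2.1 =
      (Mmat d).mulVec (parikh d ((fmap d)^[n] t).2.1) +
        fmapIncrement d ((t.1 + n) % (d - 1)) ((t.2.2 + n) % (d - 1)) := by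
  rw [Function.iterate_succ_apply', parikh_fmap (lt_of_mem_fmap_iterate (by omega) hw n),
    fmap_iterate_fst ha, fmap_iterate_snd_snd hb]

end Orbits

section InitialTriplets

variable {d : ℕ}

theorem Tinit_fst (d j : ℕ) : (Tinit d j).1 = 0 := by
  unfold Tinit; split_ifs <;> rfl

theorem lt_of_mem_Tinit (hd : 0 < d) (j : ℕ) : ∀ x ∈ (Tinit d j).2.1, x < d := by
  unfold Tinit; split_ifs <;> simp [hd]

theorem Tinit_snd_snd {j : ℕ} (hj : j ≤ d - 1) : (Tinit d j).2.2 = j % (d - 1) := by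
  unfold Tinit
  split_ifs with h
  · rw [h, Nat.mod_self]
  · exact (Nat.mod_eq_of_lt (lt_of_le_of_ne hj h)).symm

/-- The vector `ℓ_n^{(k)}`, the increment at step `n` of the orbit of `T_{d-1-k}` under `f`. -/
def ell (d k n : ℕ) : Fin d → ℕ := fun i =>
  (if (i : ℕ) = 0 then 1 else 0) +
    (if (i : ℕ) = d - 1 then
      (if 1 ≤ k ∧ k ≤ d - 2 then
        (if n % (d - 1) = k - 1 ∨ n % (d - 1) = d - 2 then 1 else 0)
      else
        (if n % (d - 1) = d - 2 then 2 else 0))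
    else 0)

theorem fmapIncrement_mod_eq_ell {k : ℕ} (hk : k ≤ d - 1) (n : ℕ) :
    fmapIncrement d (n % (d - 1)) ((d - 1 - k + n) % (d - 1)) = ell d k n := by
  unfold fmapIncrement ell
  rcases Nat.eq_zero_or_pos k with rfl | hk_pos
  · simp only [tsub_zero, Nat.add_mod_left]
    grind
  · have hits_iff : (d - 1 - k + n) % (d - 1) = d - 2 ↔ n % (d - 1) = k - 1 :=
      sub_add_mod_eq_pred_iff hk_pos hk n
    simp only [hits_iff]
    grind

end InitialTriplets

theorem statement12_general (d : ℕ) (hd : 2 ≤ d) (k : ℕ) (hk : k ≤ d - 1) (n : ℕ) :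
    parikh d ((fmap d)^[n + 1] (Tinit d (d - 1 - k))).2.1 =
      (Mmat d).mulVec (parikh d ((fmap d)^[n] (Tinit d (d - 1 - k))).2.1) +
        ell d k n := by
  have hb : (Tinit d (d - 1 - k)).2.2 = (d - 1 - k) % (d - 1) := Tinit_snd_snd (Nat.sub_le _ _)
  have hb_lt : (Tinit d (d - 1 - k)).2.2 < d - 1 := hb ▸ Nat.mod_lt _ (by omega)
  rw [parikh_fmap_iterate_succ (by rw [Tinit_fst]; omega) (lt_of_mem_Tinit (by omega) _) hb_lt,
    Tinit_fst, zero_add, hb, Nat.mod_add_mod, fmapIncrement_mod_eq_ell hk]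

/-- Let `d ≥ 3` and `k ≤ d−1`. For `w_n` the middle component of
`f^n(T_{d−1−k})`, the Parikh vectors satisfy `w⃗_{n+1} = M w⃗_n + ℓ_n^{(k)}`, where `M`
is the incidence matrix of `φ_d` and `ℓ_n^{(k)}` is as follows: for `1 ≤ k ≤ d−2` it is
`e_0 + e_{d−1}` if `n ≡ k−1` or `n ≡ d−2 (mod d−1)` and `e_0` otherwise; for `k = 0` and
`k = d−1` it is `e_0 + 2e_{d−1}` if `n ≡ d−2 (mod d−1)` and `e_0` otherwise. -/
theorem statement12 (d : ℕ) (hd : 3 ≤ d) (u : ℕ → ℕ) (hu : IsPhiFixed d u)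
    (k : ℕ) (hk : k ≤ d - 1) (n : ℕ) :
    parikh d ((fmap d)^[n + 1] (Tinit d (d - 1 - k))).2.1 =
      (Mmat d).mulVec (parikh d ((fmap d)^[n] (Tinit d (d - 1 - k))).2.1) +
      (fun i : Fin d =>
        (if (i : ℕ) = 0 then 1 else 0) +
        (if (i : ℕ) = d - 1 then
          (if 1 ≤ k ∧ k ≤ d - 2 then
            (if n % (d - 1) = k - 1 ∨ n % (d - 1) = d - 2 then 1 else 0)
          else
            (if n % (d - 1) = d - 2 then 2 else 0))
        else 0)) :=
  statement12_general d (by omega) k hk n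
end RichRT
end

section
/- Let d ≥ 3 and define F_0 = ε, F_i = φ(F_{i−1})0 for 1 ≤ i ≤ d−1. Then: (i) F_k·k = φ^k(0) for every 0 ≤ k ≤ d−1; (ii) φ(F_k)·0 = φ^k(0)·F_k for every 0 ≤ k ≤ d−1; (iii) φ^d(0) = φ^{d−1}(0)·φ^{d−1}(0)·(d−1); (iv) φ^k(d−1) = F_k·(d−1)(d−1)·φ(d−1)·φ^2(d−1)⋯φ^{k−1}(d−1) for every 1 ≤ k ≤ d−1. -/
namespace RichRT

variable {A : Type*}

/-!
The word `F_k` is what iterating `φ` leaves in front of a letter. Since `φ(i) = 0(i+1)` for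
`i < d-1`, the recursion `F_{k+1} = φ(F_k)0` gives `φ^k(i) = F_k·(i+k)` as long as `i + k ≤ d-1`.
It also unrolls from the other end, `F_{k+1} = φ^k(0)·F_k`, and this is (ii). Applying `φ` once
more to `φ^{d-1}(0) = F_{d-1}(d-1)` hits the exceptional letter, whose image `0(d-1)(d-1)` has one
extra `d-1` and yields (iii). In `φ^k(d-1)` this extra letter appears at every step, and its
iterated images make up the product in (iv).
-/

theorem flatMap_range_succ' {α : Type*} (k : ℕ) (f : ℕ → List α) :
    (List.range (k + 1)).flatMap f = f 0 ++ (List.range k).flatMap fun j => f (j + 1) := by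
  simp [List.range_succ_eq_map, List.flatMap_map]

section

variable {d : ℕ}

theorem phiW_append (v w : List ℕ) : phiW d (v ++ w) = phiW d v ++ phiW d w :=
  List.flatMap_append

theorem phiW_flatMap {ι : Type*} (l : List ι) (f : ι → List ℕ) :
    phiW d (l.flatMap f) = l.flatMap fun j => phiW d (f j) :=
  List.flatMap_assoc

theorem phiW_singleton_of_lt {i : ℕ} (hi : i < d - 1) : phiW d [i] = [0, i + 1] := by
  simp [phiW, phiL, hi]

theorem phiW_singleton_last : phiW d [d - 1] = [0, d - 1, d - 1] := by
  simp [phiW, phiL]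

theorem Fword_succ_eq_iterate_append (k : ℕ) :
    Fword d (k + 1) = (phiW d)^[k] [0] ++ Fword d k := by
  induction k with
  | zero => rfl
  | succ k ih =>
    calc Fword d (k + 2)
        = phiW d ((phiW d)^[k] [0] ++ Fword d k) ++ [0] := by rw [Fword, ih]
      _ = (phiW d)^[k + 1] [0] ++ Fword d (k + 1) := by
          rw [phiW_append, Function.iterate_succ_apply', Fword, List.append_assoc]

theorem phiW_iterate_singleton {i k : ℕ} (hik : i + k ≤ d - 1) :
    (phiW d)^[k] [i] = Fword d k ++ [i + k] := by
  induction k with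
  | zero => rfl
  | succ k ih =>
    have image_letter : phiW d [i + k] = [0, i + (k + 1)] := phiW_singleton_of_lt (by lia)
    calc (phiW d)^[k + 1] [i]
        = phiW d (Fword d k) ++ phiW d [i + k] := by
          rw [Function.iterate_succ_apply', ih (by lia), phiW_append]
      _ = Fword d (k + 1) ++ [i + (k + 1)] := by
          simp [image_letter, Fword]

theorem phiW_iterate_self (hd : 0 < d) :
    (phiW d)^[d] [0] = (phiW d)^[d - 1] [0] ++ (phiW d)^[d - 1] [0] ++ [d - 1] := by
  have iterate_pred : (phiW d)^[d - 1] [0] = Fword d (d - 1) ++ [d - 1] := by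
    simpa using phiW_iterate_singleton (d := d) (i := 0) (k := d - 1) (by simp)
  calc (phiW d)^[d] [0]
      = phiW d ((phiW d)^[d - 1] [0]) := by
        rw [← Function.iterate_succ_apply' (phiW d), Nat.succ_eq_add_one, Nat.sub_add_cancel hd]
    _ = Fword d (d - 1 + 1) ++ [d - 1, d - 1] := by
        simp [iterate_pred, phiW_append, phiW_singleton_last, Fword]
    _ = (phiW d)^[d - 1] [0] ++ (Fword d (d - 1) ++ [d - 1]) ++ [d - 1] := by
        simp [Fword_succ_eq_iterate_append]
    _ = (phiW d)^[d - 1] [0] ++ (phiW d)^[d - 1] [0] ++ [d - 1] := by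
        rw [← iterate_pred]

theorem phiW_iterate_singleton_last (k : ℕ) :
    (phiW d)^[k] [d - 1] =
      Fword d k ++ [d - 1] ++ (List.range k).flatMap fun j => (phiW d)^[j] [d - 1] := by
  induction k with
  | zero => rfl
  | succ k ih =>
    calc (phiW d)^[k + 1] [d - 1]
        = phiW d (Fword d k) ++ phiW d [d - 1] ++
            (List.range k).flatMap fun j => (phiW d)^[j + 1] [d - 1] := by
          simp only [Function.iterate_succ_apply', ih, phiW_append, phiW_flatMap]
      _ = Fword d (k + 1) ++ [d - 1] ++
            ([d - 1] ++ (List.range k).flatMap fun j => (phiW d)^[j + 1] [d - 1]) := by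
          simp [phiW_singleton_last, Fword]
      _ = Fword d (k + 1) ++ [d - 1] ++
            (List.range (k + 1)).flatMap fun j => (phiW d)^[j] [d - 1] := by
          rw [flatMap_range_succ', Function.iterate_zero_apply]

end

theorem statement14_general (d : ℕ) (hd : 0 < d) :
    (∀ k : ℕ, k ≤ d - 1 → Fword d k ++ [k] = (phiW d)^[k] [0]) ∧
    (∀ k : ℕ, phiW d (Fword d k) ++ [0] = (phiW d)^[k] [0] ++ Fword d k) ∧
    ((phiW d)^[d] [0] = (phiW d)^[d - 1] [0] ++ (phiW d)^[d - 1] [0] ++ [d - 1]) ∧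
    (∀ k : ℕ, 1 ≤ k →
      (phiW d)^[k] [d - 1] =
        Fword d k ++ [d - 1, d - 1] ++
          (List.range (k - 1)).flatMap (fun j => (phiW d)^[j + 1] [d - 1])) := by
  refine ⟨fun k hk => ?_, Fword_succ_eq_iterate_append, phiW_iterate_self hd, fun k hk => ?_⟩
  · simpa using (phiW_iterate_singleton (i := 0) (by simpa using hk)).symm
  · obtain ⟨m, rfl⟩ := Nat.exists_eq_add_of_le' hk
    rw [phiW_iterate_singleton_last, flatMap_range_succ', Function.iterate_zero_apply]
    simp

/-- Let `d ≥ 3` and `F_0 = ε`, `F_i = φ(F_{i−1})0`. Then (i) `F_k·k = φ^k(0)`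
for `k ≤ d−1`; (ii) `φ(F_k)·0 = φ^k(0)·F_k` for `k ≤ d−1`; (iii)
`φ^d(0) = φ^{d−1}(0)·φ^{d−1}(0)·(d−1)`; (iv) for `1 ≤ k ≤ d−1`,
`φ^k(d−1) = F_k·(d−1)(d−1)·φ(d−1)·φ²(d−1)⋯φ^{k−1}(d−1)`. -/
theorem statement14 (d : ℕ) (hd : 3 ≤ d) :
    (∀ k : ℕ, k ≤ d - 1 → Fword d k ++ [k] = (phiW d)^[k] [0]) ∧
    (∀ k : ℕ, k ≤ d - 1 →
      phiW d (Fword d k) ++ [0] = (phiW d)^[k] [0] ++ Fword d k) ∧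
    ((phiW d)^[d] [0] = (phiW d)^[d - 1] [0] ++ (phiW d)^[d - 1] [0] ++ [d - 1]) ∧
    (∀ k : ℕ, 1 ≤ k → k ≤ d - 1 →
      (phiW d)^[k] [d - 1] =
        Fword d k ++ [d - 1, d - 1] ++
          (List.range (k - 1)).flatMap (fun j => (phiW d)^[j + 1] [d - 1])) := by
  have ⟨letter, unroll, self, last⟩ := statement14_general d (by lia)
  exact ⟨letter, fun k _ => unroll k, self, fun k hk _ => last k hk⟩

end RichRT
end
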